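/- Let $p \in (0,1)$, $0 < d \le 1 \le u$ with $u \ne d$, $\tilde{k}_0(n,u,d) = \lfloor n \ln(1/d)/\ln(u/d) \rfloor$, let $X_n$ be a Binomial$(n,p)$ random variable, and define the net profit $T_n = -1 + \sum_{k=0}^{\tilde{k}_0(n,u,d)} \mathbf{1}\{X_n = k\}\, u^k d^{n-k} + 2\cdot\mathbf{1}\{X_n \ge \tilde{k}_0(n,u,d)+1\}$. Then $\mathbb{V}(T_n) \to 0$ as $n \to \infty$ if $u^p d^{1-p} \ne 1$, and $\mathbb{V}(T_n) \to 1$ as $n \to \infty$ if $u^p d^{1-p} = 1$. -/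

import Mathlib

open Filter MeasureTheory

/-- Threshold separating losing from winning numbers of heads. -/
noncomputable def ktilde (n : ℕ) (u d : ℝ) : ℕ :=
  ⌊(n : ℝ) * Real.log (1/d) / Real.log (u/d)⌋₊

/-
Write `L = log (u / d)` and `q = log (1 / d) / L`. Then `T n = g (X n - n q)` almost surely, where
`g x = exp (L x) - 1` for `x ≤ 0` and `g x = 1` for `x > 0`; the function `g` is bounded, with
limits `-1` at `-∞` and `1` at `+∞`. Since `X n - n q` leaves every bounded interval, only the limit
`m` of `P (X n ≤ n q + c)`, the same for every constant `c`, matters: `T n` behaves like a random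
sign that is negative with probability `m`, and `Var T n → 4 m (1 - m)`. By the law of large numbers
`m` is `0` or `1` if `p ≠ q`, by the central limit theorem `m = 1 / 2` if `p = q`, and
`u ^ p * d ^ (1 - p)` is `exp (L (p - q))`.
-/

open ProbabilityTheory Set
open scoped Topology

section Escape

variable {ι : Type*} {l : Filter ι} {ν : ι → Measure ℝ} [∀ i, IsProbabilityMeasure (ν i)]
  {g : ℝ → ℝ} {m a b M : ℝ}

lemma integral_abs_le_add_mul_measureReal_Iic_sub {ν : Measure ℝ} [IsProbabilityMeasure ν]
    (hg : Measurable g) (hM : ∀ x, |g x| ≤ M) {s t ε : ℝ} (hst : s ≤ t)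
    (hε : ∀ x ∉ Ioc s t, |g x| ≤ ε) :
    ∫ x, |g x| ∂ν ≤ ε + M * (ν.real (Iic t) - ν.real (Iic s)) := by
  have hε0 : 0 ≤ ε := (abs_nonneg _).trans (hε s left_notMem_Ioc)
  have hg_int : Integrable (fun x => |g x|) ν :=
    (Integrable.of_bound hg.aestronglyMeasurable M (ae_of_all _ hM)).abs
  have hind_int : Integrable ((Ioc s t).indicator fun _ => M) ν :=
    (integrable_const M).indicator measurableSet_Ioc
  have hle : ∀ x, |g x| ≤ ε + (Ioc s t).indicator (fun _ => M) x := fun x => by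
    by_cases hx : x ∈ Ioc s t
    · simpa only [indicator_of_mem hx] using (hM x).trans (le_add_of_nonneg_left hε0)
    · simpa only [indicator_of_notMem hx, add_zero] using hε x hx
  calc ∫ x, |g x| ∂ν
      ≤ ∫ x, (ε + (Ioc s t).indicator (fun _ => M) x) ∂ν :=
        integral_mono hg_int ((integrable_const ε).add hind_int) hle
    _ = ε + M * ν.real (Iic t \ Iic s) := by
        rw [integral_add (integrable_const ε) hind_int, integral_const, probReal_univ, one_smul,
          integral_indicator_const _ measurableSet_Ioc, smul_eq_mul, mul_comm M, Iic_sdiff_Iic]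
    _ = ε + M * (ν.real (Iic t) - ν.real (Iic s)) := by
        rw [measureReal_sdiff (Iic_subset_Iic.2 hst) measurableSet_Iic]

lemma tendsto_integral_zero_of_tendsto_measureReal_Iic
    (hν : ∀ c, Tendsto (fun i => (ν i).real (Iic c)) l (𝓝 m)) (hg : Measurable g)
    (hM : ∀ x, |g x| ≤ M) (hbot : Tendsto g atBot (𝓝 0)) (htop : Tendsto g atTop (𝓝 0)) :
    Tendsto (fun i => ∫ x, g x ∂ν i) l (𝓝 0) := by
  refine Metric.tendsto_nhds.2 fun ε hε => ?_
  obtain ⟨s, hs⟩ := eventually_atBot.1 (Metric.tendsto_nhds.1 hbot (ε / 2) (half_pos hε))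
  obtain ⟨t, ht⟩ := eventually_atTop.1 (Metric.tendsto_nhds.1 htop (ε / 2) (half_pos hε))
  simp only [Real.dist_0_eq_abs] at hs ht ⊢
  have hsmall : ∀ x ∉ Ioc s (max s t), |g x| ≤ ε / 2 := fun x hx => by
    rcases le_or_gt x s with hxs | hxs
    · exact (hs x hxs).le
    · have hxt : max s t < x := not_le.1 fun hxt => hx ⟨hxs, hxt⟩
      exact (ht x ((le_max_right s t).trans hxt.le)).le
  have hlim : Tendsto (fun i => ε / 2 + M * ((ν i).real (Iic (max s t)) - (ν i).real (Iic s))) l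
      (𝓝 (ε / 2)) := by
    simpa using (((hν (max s t)).sub (hν s)).const_mul M).const_add (ε / 2)
  filter_upwards [hlim.eventually_lt_const (half_lt_self hε)] with i hi
  exact (abs_integral_le_integral_abs.trans
    (integral_abs_le_add_mul_measureReal_Iic_sub hg hM (le_max_left s t) hsmall)).trans_lt hi

lemma tendsto_integral_of_tendsto_measureReal_Iic
    (hν : ∀ c, Tendsto (fun i => (ν i).real (Iic c)) l (𝓝 m)) (hg : Measurable g)
    (hM : ∀ x, |g x| ≤ M) (hbot : Tendsto g atBot (𝓝 a)) (htop : Tendsto g atTop (𝓝 b)) :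
    Tendsto (fun i => ∫ x, g x ∂ν i) l (𝓝 (m * a + (1 - m) * b)) := by
  set step : ℝ → ℝ := fun x => b + (Iic 0).indicator (fun _ => a - b) x with hstep
  have hstep_bot : ∀ᶠ x in atBot, step x = a := by
    filter_upwards [eventually_le_atBot 0] with x hx
    simp [hstep, hx]
  have hstep_top : ∀ᶠ x in atTop, step x = b := by
    filter_upwards [eventually_gt_atTop 0] with x hx
    simp [hstep, hx.not_ge]
  have hstep_meas : Measurable step :=
    measurable_const.add (measurable_const.indicator measurableSet_Iic)
  have hstep_bound : ∀ x, |step x| ≤ |b| + |a - b| := fun x =>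
    (abs_add_le _ _).trans (add_le_add_right (norm_indicator_le_norm_self (fun _ => a - b) x) _)
  have hstep_integral : ∀ i, ∫ x, step x ∂ν i = b + (ν i).real (Iic 0) * (a - b) := fun i => by
    rw [integral_add (integrable_const b) ((integrable_const _).indicator measurableSet_Iic),
      integral_indicator_const _ measurableSet_Iic, integral_const, probReal_univ, one_smul,
      smul_eq_mul]
  have hdiff : Tendsto (fun i => ∫ x, (g x - step x) ∂ν i) l (𝓝 0) := by
    refine tendsto_integral_zero_of_tendsto_measureReal_Iic hν (hg.sub hstep_meas)
      (fun x => (abs_sub _ _).trans (add_le_add (hM x) (hstep_bound x))) ?_ ?_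
    · simpa using hbot.sub (tendsto_const_nhds.congr' (hstep_bot.mono fun _ h => h.symm))
    · simpa using htop.sub (tendsto_const_nhds.congr' (hstep_top.mono fun _ h => h.symm))
  convert hdiff.add (((hν 0).mul_const (a - b)).const_add b) using 2 with i
  · rw [← hstep_integral, integral_sub
      (Integrable.of_bound hg.aestronglyMeasurable M (ae_of_all _ hM))
      (Integrable.of_bound hstep_meas.aestronglyMeasurable _ (ae_of_all _ hstep_bound)),
      sub_add_cancel]
  · ring

lemma tendsto_variance_of_tendsto_measureReal_Iic
    (hν : ∀ c, Tendsto (fun i => (ν i).real (Iic c)) l (𝓝 m)) (hg : Measurable g)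
    (hM : ∀ x, |g x| ≤ M) (hbot : Tendsto g atBot (𝓝 a)) (htop : Tendsto g atTop (𝓝 b)) :
    Tendsto (fun i => Var[g; ν i]) l (𝓝 (m * (1 - m) * (b - a) ^ 2)) := by
  have hsq : ∀ x, |g x ^ 2| ≤ M ^ 2 := fun x => by
    rw [abs_pow]; exact pow_le_pow_left₀ (abs_nonneg _) (hM x) 2
  have hfirst := tendsto_integral_of_tendsto_measureReal_Iic hν hg hM hbot htop
  have hsecond := tendsto_integral_of_tendsto_measureReal_Iic hν (hg.pow_const 2) hsq
    (hbot.pow 2) (htop.pow 2)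
  convert hsecond.sub (hfirst.pow 2) using 2 with i
  · exact variance_eq_sub (MemLp.of_bound hg.aestronglyMeasurable M (ae_of_all _ hM))
  · ring

end Escape

section LimitTheorems

variable {Ω : Type*} {mΩ : MeasurableSpace Ω} {P : Measure Ω} [IsProbabilityMeasure P]

lemma tendsto_measureReal_le_of_tendstoInDistribution {ι Ω' : Type*} {l : Filter ι}
    [l.IsCountablyGenerated] {mΩ' : MeasurableSpace Ω'} {P' : Measure Ω'} [IsProbabilityMeasure P']
    {Y : ι → Ω → ℝ} {Z : Ω' → ℝ} {c : ι → ℝ} {c₀ : ℝ}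
    (hY : TendstoInDistribution Y l Z (fun _ => P) P') (hc : Tendsto c l (𝓝 c₀))
    (hZ : P' {ω | Z ω = c₀} = 0) :
    Tendsto (fun i => P.real {ω | Y i ω ≤ c i}) l (𝓝 (P'.real {ω | Z ω ≤ c₀})) := by
  have hconst : TendstoInMeasure P (fun i _ => -c i) l fun _ => -c₀ :=
    fun ε hε => tendsto_const_nhds.congr' <| by
      filter_upwards [EMetric.tendsto_nhds.1 hc.neg ε hε] with i hi
      simp only [hi.not_ge, ofPred_false, measure_empty]
  have hshift := hY.add_of_tendstoInMeasure_const hconst fun _ => aemeasurable_const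
  have hnull : P'.map (fun ω => Z ω + -c₀) (frontier (Iic 0)) = 0 := by
    rw [frontier_Iic, Measure.map_apply_of_aemeasurable hshift.aemeasurable_limit
      (measurableSet_singleton 0)]
    simpa [preimage, add_neg_eq_zero] using hZ
  have hlim := ProbabilityMeasure.tendsto_measure_of_null_frontier_of_tendsto' hshift.tendsto hnull
  simp only [ProbabilityMeasure.coe_mk, Measure.map_apply_of_aemeasurable
    hshift.aemeasurable_limit measurableSet_Iic, Measure.map_apply_of_aemeasurable
    (hshift.forall_aemeasurable _) measurableSet_Iic] at hlim
  simpa [Measure.real, preimage, Function.comp_def, ← sub_eq_add_neg] using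
    (ENNReal.tendsto_toReal (measure_ne_top _ _)).comp hlim

lemma measureReal_Iic_zero_of_map_neg_eq {ν : Measure ℝ} [IsProbabilityMeasure ν]
    (hneg : ν.map (fun x => -x) = ν) (hzero : ν {0} = 0) : ν.real (Iic 0) = 1 / 2 := by
  have hreflect : ν.real (Iic 0)ᶜ = ν.real (Iic 0) := by
    calc ν.real (Iic 0)ᶜ = ν.real (Ici 0) := by
          rw [compl_Iic]
          exact measureReal_congr (Ioi_ae_eq_Ici' hzero)
      _ = (ν.map fun x => -x).real (Iic 0) := by
          rw [map_measureReal_apply measurable_neg measurableSet_Iic]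
          simp [preimage, Ici]
      _ = ν.real (Iic 0) := by rw [hneg]
  linarith [probReal_add_probReal_compl (μ := ν) (measurableSet_Iic (a := (0 : ℝ)))]

variable {ξ : ℕ → Ω → ℝ}

lemma tendsto_measureReal_sum_sub_le_of_mean_ne (hint : Integrable (ξ 0) P)
    (hindep : Pairwise fun i j => ξ i ⟂ᵢ[P] ξ j) (hident : ∀ i, IdentDistrib (ξ i) (ξ 0) P P)
    {q : ℝ} (hq : P[ξ 0] ≠ q) (c : ℝ) :
    Tendsto (fun n : ℕ => P.real {ω | ∑ i ∈ Finset.range n, ξ i ω - n * q ≤ c}) atTop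
      (𝓝 (if P[ξ 0] ≤ q then 1 else 0)) := by
  have hmeas : ∀ n : ℕ, AEMeasurable (fun ω => (∑ i ∈ Finset.range n, ξ i ω) / n) P := fun n =>
    (Finset.aemeasurable_fun_sum _ fun i _ => (hident i).aemeasurable_fst).div_const _
  have hdist : TendstoInDistribution (fun (n : ℕ) ω => (∑ i ∈ Finset.range n, ξ i ω) / n) atTop
      (fun _ => P[ξ 0]) (fun _ => P) P :=
    (tendstoInMeasure_of_tendsto_ae (fun n => (hmeas n).aestronglyMeasurable)
      (strong_law_ae_real ξ hint hindep hident)).tendstoInDistribution_of_aemeasurable hmeas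
        aemeasurable_const
  have hthreshold : Tendsto (fun n : ℕ => q + c / n) atTop (𝓝 q) := by
    simpa using (tendsto_const_div_atTop_nhds_zero_nat c).const_add q
  have hlim := tendsto_measureReal_le_of_tendstoInDistribution hdist hthreshold (by simp [hq])
  have hvalue : P.real {_ω : Ω | P[ξ 0] ≤ q} = if P[ξ 0] ≤ q then 1 else 0 := by
    split_ifs with h <;> simp [h]
  rw [← hvalue]
  refine hlim.congr' ?_
  filter_upwards [eventually_gt_atTop 0] with n hn
  have hn' : (0 : ℝ) < n := Nat.cast_pos.2 hn
  congr with ω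
  rw [div_le_iff₀ hn', add_mul, div_mul_cancel₀ _ hn'.ne', sub_le_iff_le_add', mul_comm q]

lemma tendsto_measureReal_sum_sub_mean_le (hL2 : MemLp (ξ 0) 2 P) (hvar : Var[ξ 0; P] ≠ 0)
    (hindep : iIndepFun ξ P) (hident : ∀ i, IdentDistrib (ξ i) (ξ 0) P P) (c : ℝ) :
    Tendsto (fun n : ℕ => P.real {ω | ∑ i ∈ Finset.range n, ξ i ω - n * P[ξ 0] ≤ c}) atTop
      (𝓝 (1 / 2)) := by
  set v := Var[ξ 0; P].toNNReal
  have hv0 : v ≠ 0 := (Real.toNNReal_pos.2 ((variance_nonneg _ _).lt_of_ne' hvar)).ne'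
  have : NullSingletonClass (gaussianReal 0 v) := nullSingletonClass_gaussianReal hv0
  have hthreshold : Tendsto (fun n : ℕ => (√n)⁻¹ * c) atTop (𝓝 0) := by
    simpa using (tendsto_inv_atTop_zero.comp
      (Real.tendsto_sqrt_atTop.comp tendsto_natCast_atTop_atTop)).mul_const c
  have hlim := tendsto_measureReal_le_of_tendstoInDistribution
    (tendstoInDistribution_inv_sqrt_mul_sum_sub (HasLaw.id (μ := gaussianReal 0 v)) hL2 hindep
      hident) hthreshold (by simp)
  have hhalf : (gaussianReal 0 v).real {x | id x ≤ 0} = 1 / 2 :=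
    measureReal_Iic_zero_of_map_neg_eq (by simpa using gaussianReal_map_neg (μ := 0) (v := v))
      (by simp)
  rw [← hhalf]
  refine hlim.congr' ?_
  filter_upwards [eventually_gt_atTop 0] with n hn
  have hn' : 0 < (√(n : ℝ))⁻¹ := by positivity
  simp only [mul_le_mul_iff_right₀ hn']

end LimitTheorems

section Binomial

lemma charFun_bernoulliMeasure_one_zero (p : unitInterval) (t : ℝ) :
    charFun Ber((1 : ℝ), 0, p) t = p * Complex.exp (t * Complex.I) + (1 - p) := by
  simp [charFun_apply_real, integral_bernoulliMeasure]

lemma charFun_map_cast_binomial (n : ℕ) (p : unitInterval) (t : ℝ) :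
    charFun Bin(ℝ, n, p) t = (p * Complex.exp (t * Complex.I) + (1 - p)) ^ n := by
  rw [charFun_apply_real, integral_map_cast_binomial, ← Nat.range_succ_eq_Iic, add_pow]
  refine Finset.sum_congr rfl fun k _ => ?_
  have hexp : Complex.exp (t * k * Complex.I) = Complex.exp (t * Complex.I) ^ k := by
    rw [← Complex.exp_nat_mul]; ring_nf
  push_cast [Complex.real_smul, hexp]
  ring

variable {Ω : Type*} {mΩ : MeasurableSpace Ω} {P : Measure Ω} {p : unitInterval}

lemma hasLaw_sum_range_binomial {ξ : ℕ → Ω → ℝ} (hξ : ∀ i, HasLaw (ξ i) Ber((1 : ℝ), 0, p) P)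
    (hindep : iIndepFun ξ P) (n : ℕ) :
    HasLaw (fun ω => ∑ i ∈ Finset.range n, ξ i ω) Bin(ℝ, n, p) P := by
  have : IsProbabilityMeasure P := hindep.isProbabilityMeasure
  have hmeas := fun i => (hξ i).aemeasurable
  refine ⟨Finset.aemeasurable_fun_sum _ fun i _ => hmeas i, Measure.ext_of_charFun ?_⟩
  ext t
  rw [(hindep.restrict _).charFun_map_fun_finsetSum_eq_prod fun i _ => hmeas i,
    charFun_map_cast_binomial]
  simp [(hξ _).map_eq, charFun_bernoulliMeasure_one_zero]

lemma hasLaw_binomial_of_measure_singleton {X : Ω → ℕ} (hX : Measurable X) (n : ℕ)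
    (h : ∀ k, P {ω | X ω = k} =
      ENNReal.ofReal ((n.choose k : ℝ) * p ^ k * (1 - p) ^ (n - k))) :
    HasLaw X Bin(n, p) P where
  map_eq := Measure.ext_of_singleton fun k => by
    rw [Measure.map_apply hX (measurableSet_singleton k), binomial_singleton]
    exact h k

lemma integral_id_bernoulliMeasure (p : unitInterval) : ∫ x, x ∂Ber((1 : ℝ), 0, p) = p := by
  simp [integral_bernoulliMeasure]

lemma memLp_id_bernoulliMeasure (p : unitInterval) : MemLp id 2 Ber((1 : ℝ), 0, p) :=
  (memLp_two_iff_integrable_sq aestronglyMeasurable_id).2 (integrable_bernoulliMeasure _ _ _ _)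

lemma variance_id_bernoulliMeasure (p : unitInterval) :
    Var[id; Ber((1 : ℝ), 0, p)] = p * (1 - p) := by
  rw [variance_eq_sub (memLp_id_bernoulliMeasure p)]
  simp only [Pi.pow_apply, id_eq, integral_bernoulliMeasure, smul_eq_mul]
  ring

lemma measureReal_sum_range_sub_le_eq_binomial {ξ : ℕ → Ω → ℝ}
    (hξ : ∀ i, HasLaw (ξ i) Ber((1 : ℝ), 0, p) P) (hindep : iIndepFun ξ P) (n : ℕ) (x c : ℝ) :
    P.real {ω | ∑ i ∈ Finset.range n, ξ i ω - x ≤ c} = Bin(n, p).real {k | (k : ℝ) - x ≤ c} := by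
  have hset : MeasurableSet {y : ℝ | y - x ≤ c} :=
    measurableSet_le (measurable_id.sub_const x) measurable_const
  calc P.real {ω | ∑ i ∈ Finset.range n, ξ i ω - x ≤ c}
      = Bin(ℝ, n, p).real {y | y - x ≤ c} :=
        (hasLaw_sum_range_binomial hξ hindep n).measureReal_eq hset
    _ = Bin(n, p).real {k | (k : ℝ) - x ≤ c} := map_measureReal_apply (by fun_prop) hset

variable {q : ℝ}

lemma tendsto_binomial_real_sub_le_of_ne (hpq : (p : ℝ) ≠ q) (c : ℝ) :
    Tendsto (fun n : ℕ => Bin(n, p).real {k | (k : ℝ) - n * q ≤ c}) atTop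
      (𝓝 (if (p : ℝ) ≤ q then 1 else 0)) := by
  obtain ⟨Ω, _, P, ξ, -, hlaw, hindep, _⟩ := exists_iid ℕ Ber((1 : ℝ), 0, p)
  have hmean : P[ξ 0] = (p : ℝ) := (hlaw 0).integral_eq.trans (integral_id_bernoulliMeasure p)
  have hL2 : MemLp (ξ 0) 2 P :=
    ((hlaw 0).identDistrib HasLaw.id).memLp_iff.2 (memLp_id_bernoulliMeasure p)
  have hlim := tendsto_measureReal_sum_sub_le_of_mean_ne (hL2.integrable one_le_two)
    (fun _ _ hij => hindep.indepFun hij) (fun i => (hlaw i).identDistrib (hlaw 0))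
    (hmean.trans_ne hpq) c
  simpa only [hmean, measureReal_sum_range_sub_le_eq_binomial hlaw hindep] using hlim

lemma tendsto_binomial_real_sub_mul_le (hp0 : p ≠ 0) (hp1 : p ≠ 1) (c : ℝ) :
    Tendsto (fun n : ℕ => Bin(n, p).real {k | (k : ℝ) - n * p ≤ c}) atTop (𝓝 (1 / 2)) := by
  obtain ⟨Ω, _, P, ξ, -, hlaw, hindep, _⟩ := exists_iid ℕ Ber((1 : ℝ), 0, p)
  have hmean : P[ξ 0] = (p : ℝ) := (hlaw 0).integral_eq.trans (integral_id_bernoulliMeasure p)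
  have hL2 : MemLp (ξ 0) 2 P :=
    ((hlaw 0).identDistrib HasLaw.id).memLp_iff.2 (memLp_id_bernoulliMeasure p)
  have hvar : Var[ξ 0; P] ≠ 0 := by
    rw [(hlaw 0).variance_eq, variance_id_bernoulliMeasure]
    exact mul_ne_zero (unitInterval.coe_ne_zero.2 hp0)
      (sub_ne_zero.2 (unitInterval.coe_ne_one.2 hp1).symm)
  have hlim := tendsto_measureReal_sum_sub_mean_le hL2 hvar hindep
    (fun i => (hlaw i).identDistrib (hlaw 0)) c
  simpa only [hmean, measureReal_sum_range_sub_le_eq_binomial hlaw hindep] using hlim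

end Binomial

noncomputable section NetProfit

/-- The proportion of heads at which a score multiplied by `u` on heads and by `d` on tails keeps
its initial value, i.e. the solution `q` of `u ^ q * d ^ (1 - q) = 1`. -/
def breakEvenFreq (u d : ℝ) : ℝ :=
  Real.log (1 / d) / Real.log (u / d)

/-- The net profit as a function of the excess `x` of the number of heads over the break-even
number, where `L` is the logarithm of the factor by which one more head instead of a tail changes
the score. -/
def excessProfit (L x : ℝ) : ℝ :=
  if x ≤ 0 then Real.exp (L * x) - 1 else 1

lemma measurable_excessProfit (L : ℝ) : Measurable (excessProfit L) :=
  Measurable.ite measurableSet_Iic (by fun_prop) measurable_const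

variable {L : ℝ}

lemma abs_excessProfit_le_one (hL : 0 ≤ L) (x : ℝ) : |excessProfit L x| ≤ 1 := by
  unfold excessProfit
  split_ifs with hx
  · have hpos := Real.exp_pos (L * x)
    have hle : Real.exp (L * x) ≤ 1 :=
      Real.exp_le_one_iff.2 (mul_nonpos_of_nonneg_of_nonpos hL hx)
    exact abs_le.2 ⟨by linarith, by linarith⟩
  · simp

lemma tendsto_excessProfit_atBot (hL : 0 < L) : Tendsto (excessProfit L) atBot (𝓝 (-1)) := by
  have hexp : Tendsto (fun x => Real.exp (L * x) - 1) atBot (𝓝 (-1)) := by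
    simpa using (Real.tendsto_exp_atBot.comp (tendsto_id.const_mul_atBot hL)).sub_const 1
  refine hexp.congr' ?_
  filter_upwards [eventually_le_atBot 0] with x hx
  rw [excessProfit, if_pos hx]

lemma tendsto_excessProfit_atTop (L : ℝ) : Tendsto (excessProfit L) atTop (𝓝 1) := by
  refine tendsto_const_nhds.congr' ?_
  filter_upwards [eventually_gt_atTop 0] with x hx
  rw [excessProfit, if_neg hx.not_ge]

variable {u d : ℝ}

lemma log_div_mul_breakEvenFreq (hd : 0 < d) (hdu : d < u) :
    Real.log (u / d) * breakEvenFreq u d = -Real.log d := by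
  rw [breakEvenFreq, mul_div_cancel₀ _ (Real.log_pos ((one_lt_div hd).2 hdu)).ne', one_div,
    Real.log_inv]

lemma rpow_mul_rpow_eq_exp (hd : 0 < d) (hdu : d < u) (x y : ℝ) :
    u ^ x * d ^ (y - x) = Real.exp (Real.log (u / d) * (x - y * breakEvenFreq u d)) := by
  have hu : 0 < u := hd.trans hdu
  have hexponent : Real.log u * x + Real.log d * (y - x) =
      Real.log (u / d) * (x - y * breakEvenFreq u d) := by
    linear_combination y * log_div_mul_breakEvenFreq hd hdu - x * Real.log_div hu.ne' hd.ne'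
  rw [Real.rpow_def_of_pos hu, Real.rpow_def_of_pos hd, ← Real.exp_add, hexponent]

lemma rpow_mul_rpow_eq_one_iff (hd : 0 < d) (hdu : d < u) (x : ℝ) :
    u ^ x * d ^ (1 - x) = 1 ↔ x = breakEvenFreq u d := by
  have hL : Real.log (u / d) ≠ 0 := (Real.log_pos ((one_lt_div hd).2 hdu)).ne'
  rw [rpow_mul_rpow_eq_exp hd hdu, Real.exp_eq_one_iff, mul_eq_zero, or_iff_right hL, one_mul,
    sub_eq_zero]

lemma le_ktilde_iff (hd : 0 < d) (hd1 : d ≤ 1) (hdu : d < u) (n k : ℕ) :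
    k ≤ ktilde n u d ↔ (k : ℝ) - n * breakEvenFreq u d ≤ 0 := by
  have hq : 0 ≤ breakEvenFreq u d :=
    div_nonneg (Real.log_nonneg (one_le_one_div hd hd1)) (Real.log_pos ((one_lt_div hd).2 hdu)).le
  rw [ktilde, mul_div_assoc, ← breakEvenFreq, Nat.le_floor_iff (by positivity), sub_nonpos]

lemma netProfit_eq_excessProfit (hd : 0 < d) (hd1 : d ≤ 1) (hdu : d < u) {n j : ℕ} (hj : j ≤ n) :
    -1 + (∑ k ∈ Finset.range (ktilde n u d + 1), if j = k then u ^ k * d ^ (n - k) else 0)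
        + 2 * (if ktilde n u d + 1 ≤ j then (1 : ℝ) else 0) =
      excessProfit (Real.log (u / d)) (j - n * breakEvenFreq u d) := by
  have hscore : u ^ j * d ^ (n - j) =
      Real.exp (Real.log (u / d) * (j - n * breakEvenFreq u d)) := by
    rw [← rpow_mul_rpow_eq_exp hd hdu, ← Nat.cast_sub hj, Real.rpow_natCast, Real.rpow_natCast]
  rw [Finset.sum_ite_eq, excessProfit, ← hscore]
  simp only [Finset.mem_range, Nat.lt_succ_iff, Nat.succ_le_iff, ← le_ktilde_iff hd hd1 hdu]
  split_ifs <;> first | omega | ring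

variable {Ω : Type*} [MeasurableSpace Ω] {μ : Measure Ω} {p : unitInterval} {X : ℕ → Ω → ℕ}
  {T : ℕ → Ω → ℝ}

lemma tendsto_variance_excessProfit_of_tendsto_binomial_real (hL : 0 < L) {q m : ℝ}
    (hX : ∀ n, HasLaw (X n) Bin(n, p) μ)
    (hm : ∀ c, Tendsto (fun n : ℕ => Bin(n, p).real {k | (k : ℝ) - n * q ≤ c}) atTop (𝓝 m)) :
    Tendsto (fun n => Var[fun ω => excessProfit L (X n ω - n * q); μ]) atTop
      (𝓝 (4 * m * (1 - m))) := by
  have : IsProbabilityMeasure μ := (hX 0).isProbabilityMeasure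
  have hmeas : ∀ n, AEMeasurable (fun ω => (X n ω : ℝ) - n * q) μ := fun n =>
    ((measurable_of_countable _).comp_aemeasurable (hX n).aemeasurable).sub_const _
  have hν : ∀ n, IsProbabilityMeasure (μ.map fun ω => (X n ω : ℝ) - n * q) := fun n =>
    Measure.isProbabilityMeasure_map (hmeas n)
  have hIic : ∀ c n, (μ.map fun ω => (X n ω : ℝ) - n * q).real (Iic c) =
      Bin(n, p).real {k | (k : ℝ) - n * q ≤ c} := fun c n =>
    (map_measureReal_apply_of_aemeasurable (hmeas n) measurableSet_Iic).trans
      ((hX n).measureReal_eq (MeasurableSet.of_discrete (s := {k : ℕ | (k : ℝ) - n * q ≤ c})))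
  have hlim := tendsto_variance_of_tendsto_measureReal_Iic
    (fun c => (hm c).congr fun n => (hIic c n).symm) (measurable_excessProfit L)
    (abs_excessProfit_le_one hL.le) (tendsto_excessProfit_atBot hL) (tendsto_excessProfit_atTop L)
  convert hlim using 2 with n
  · exact (variance_map (measurable_excessProfit L).aemeasurable (hmeas n)).symm
  · ring

lemma tendsto_variance_netProfit (hd0 : 0 < d) (hd1 : d ≤ 1) (hdu : d < u)
    (hX : ∀ n, HasLaw (X n) Bin(n, p) μ)
    (hT : ∀ n ω, T n ω =
      -1 + (∑ k ∈ Finset.range (ktilde n u d + 1), if X n ω = k then u ^ k * d ^ (n - k) else 0)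
        + 2 * (if ktilde n u d + 1 ≤ X n ω then (1 : ℝ) else 0)) {m : ℝ}
    (hm : ∀ c, Tendsto (fun n : ℕ => Bin(n, p).real {k | (k : ℝ) - n * breakEvenFreq u d ≤ c})
      atTop (𝓝 m)) :
    Tendsto (fun n => Var[T n; μ]) atTop (𝓝 (4 * m * (1 - m))) := by
  have hL : 0 < Real.log (u / d) := Real.log_pos ((one_lt_div hd0).2 hdu)
  refine (tendsto_variance_excessProfit_of_tendsto_binomial_real hL hX hm).congr fun n => ?_
  refine variance_congr ?_
  filter_upwards [ae_le_of_hasLaw_binomial (hX n)] with ω hω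
  rw [hT, netProfit_eq_excessProfit hd0 hd1 hdu hω]

end NetProfit

theorem variance_of_net_profit_threshold_general
    {Ω : Type*} [MeasurableSpace Ω] {μ : Measure Ω} {p : unitInterval} {u d : ℝ}
    (hd0 : 0 < d) (hd1 : d ≤ 1) (hdu : d < u)
    {X : ℕ → Ω → ℕ} (hX : ∀ n, HasLaw (X n) Bin(n, p) μ)
    {T : ℕ → Ω → ℝ}
    (hT : ∀ n ω, T n ω =
      -1 + (∑ k ∈ Finset.range (ktilde n u d + 1), if X n ω = k then u ^ k * d ^ (n - k) else 0)
        + 2 * (if ktilde n u d + 1 ≤ X n ω then (1 : ℝ) else 0)) :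
    (u ^ (p : ℝ) * d ^ (1 - p : ℝ) ≠ 1 → Tendsto (fun n => Var[T n; μ]) atTop (𝓝 0)) ∧
    (p ≠ 0 → p ≠ 1 → u ^ (p : ℝ) * d ^ (1 - p : ℝ) = 1 →
      Tendsto (fun n => Var[T n; μ]) atTop (𝓝 1)) := by
  rw [Ne, rpow_mul_rpow_eq_one_iff hd0 hdu]
  constructor
  · intro hpq
    convert tendsto_variance_netProfit hd0 hd1 hdu hX hT
      (tendsto_binomial_real_sub_le_of_ne hpq) using 2
    split_ifs <;> norm_num
  · intro hp0 hp1 hpq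
    convert tendsto_variance_netProfit hd0 hd1 hdu hX hT
      (hpq ▸ tendsto_binomial_real_sub_mul_le hp0 hp1) using 2
    norm_num

theorem variance_of_net_profit_threshold
    {Ω : Type*} [MeasurableSpace Ω] (μ : Measure Ω) [IsProbabilityMeasure μ]
    (p u d : ℝ) (hp0 : 0 < p) (hp1 : p < 1)
    (hd0 : 0 < d) (hd1 : d ≤ 1) (hu : 1 ≤ u) (hne : u ≠ d)
    (X : ℕ → Ω → ℕ) (hXmeas : ∀ n, Measurable (X n))
    (hXbin : ∀ n k : ℕ,
      μ {ω | X n ω = k} = ENNReal.ofReal ((n.choose k : ℝ) * p^k * (1 - p)^(n-k)))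
    (T : ℕ → Ω → ℝ)
    (hT : ∀ n ω, T n ω =
      -1 + (∑ k ∈ Finset.range (ktilde n u d + 1),
              if X n ω = k then u^k * d^(n-k) else 0)
        + 2 * (if ktilde n u d + 1 ≤ X n ω then (1 : ℝ) else 0)) :
    (u ^ p * d ^ (1 - p) ≠ 1 →
      Tendsto (fun n : ℕ => ProbabilityTheory.variance (T n) μ) atTop (nhds 0)) ∧
    (u ^ p * d ^ (1 - p) = 1 →
      Tendsto (fun n : ℕ => ProbabilityTheory.variance (T n) μ) atTop (nhds 1)) := by
  obtain ⟨hne_one, heq_one⟩ := variance_of_net_profit_threshold_general (p := ⟨p, hp0.le, hp1.le⟩)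
    hd0 hd1 ((hd1.trans hu).lt_of_ne' hne)
    (fun n => hasLaw_binomial_of_measure_singleton (hXmeas n) n (hXbin n)) hT
  exact ⟨hne_one, heq_one (unitInterval.coe_ne_zero.1 hp0.ne') (unitInterval.coe_ne_one.1 hp1.ne)⟩
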